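/- Let m_1,…,m_n ∈ ℕ^d, let s_1,…,s_n ∈ ℕ, set m = s_1m_1 + ⋯ + s_nm_n, and let ℓ be a positive integer with ℓ ≤ s_1 + ⋯ + s_n such that gcd(ℓ, m_j) = 1 for some component m_j of m. If the Hilbert function of the local ring of V_S is non-decreasing, i.e. k ↦ H_{I_S*}(k) is non-decreasing, then the Hilbert function of the local ring of the extension is non-decreasing, i.e. k ↦ H_{(I_{S_{ℓ,m}})*}(k) is non-decreasing. -/

import Mathlib

open MvPolynomial

/-- `f*`: the nonzero homogeneous component of `f` of smallest total degree. -/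
noncomputable def lowestForm {K : Type*} [CommSemiring K] {σ : Type*}
    (f : MvPolynomial σ K) : MvPolynomial σ K :=
  homogeneousComponent (sInf {i : ℕ | homogeneousComponent i f ≠ 0}) f

/-- `I*`: the ideal of the tangent cone at the origin, generated by the
lowest-degree forms `f*` of the nonzero elements `f ∈ I`. -/
noncomputable def tangentConeIdeal {K : Type*} [CommSemiring K] {σ : Type*}
    (I : Ideal (MvPolynomial σ K)) : Ideal (MvPolynomial σ K) :=
  Ideal.span {g | ∃ f ∈ I, f ≠ 0 ∧ g = lowestForm f}

/-- The Hilbert function of `P/J` for an ideal `J` of a polynomial ring `P`: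
`H_J(k) = dim_K P_k − dim_K (J ∩ P_k)`. -/
noncomputable def hilbertFn {K : Type*} [Field K] {σ : Type*}
    (J : Ideal (MvPolynomial σ K)) (k : ℕ) : ℕ :=
  Module.finrank K (homogeneousSubmodule σ K k) -
    Module.finrank K
      (Submodule.restrictScalars K J ⊓ homogeneousSubmodule σ K k :
        Submodule K (MvPolynomial σ K))

/-!
Let `P = K[x]` and let `𝔪` be the ideal generated by the variables. The Hilbert function of the
tangent cone of an ideal `J` is the first difference of `k ↦ dim P/(J + 𝔪 ^ k)`. The coordinate ring
of the extension is the coordinate ring of `V_S` with an `ℓ`-th root `y` of the monomial `x ^ s`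
adjoined: coprimality makes `1, y, …, y ^ (ℓ - 1)` a basis, since the exponents of the images of
elements with different powers of `y` differ modulo `ℓ` in some component. As `x ^ s ∈ 𝔪 ^ ℓ`, an
element `∑ i < ℓ, r i * y ^ i` lies in the `k`-th power of the maximal ideal exactly when each `r i`
lies in `𝔪 ^ (k - i)`. Counting dimensions, the Hilbert function of the extension is the sum over
`i < ℓ` of the Hilbert function of `V_S` shifted by `i`, so monotonicity is inherited.
-/

section Order

variable {R : Type*} [CommSemiring R] {σ : Type*}

theorem mem_pow_idealOfVars_iff_homogeneousComponent {k : ℕ} {f : MvPolynomial σ R} :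
    f ∈ idealOfVars σ R ^ k ↔ ∀ j < k, homogeneousComponent j f = 0 := by
  simp only [mem_pow_idealOfVars_iff', MvPolynomial.ext_iff, coeff_homogeneousComponent, coeff_zero]
  exact ⟨fun h j hj u => by grind, fun h u hu => by simpa using h _ hu u⟩

theorem mem_pow_idealOfVars_of_isHomogeneous {k : ℕ} {f : MvPolynomial σ R}
    (hf : f.IsHomogeneous k) : f ∈ idealOfVars σ R ^ k :=
  mem_pow_idealOfVars_iff_homogeneousComponent.2 fun j hj => by
    rw [homogeneousComponent_of_mem hf, if_neg hj.ne]

theorem sub_homogeneousComponent_mem_pow_idealOfVars {R : Type*} [CommRing R] {k : ℕ}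
    {f : MvPolynomial σ R} (hf : f ∈ idealOfVars σ R ^ k) :
    f - homogeneousComponent k f ∈ idealOfVars σ R ^ (k + 1) := by
  rw [mem_pow_idealOfVars_iff'] at hf ⊢
  intro u hu
  rw [coeff_sub, coeff_homogeneousComponent]
  grind

theorem monomial_mem_pow_idealOfVars (v : σ →₀ ℕ) (c : R) :
    monomial v c ∈ idealOfVars σ R ^ v.degree :=
  mem_pow_idealOfVars_of_isHomogeneous (isHomogeneous_monomial c rfl)

theorem restrictTotalDegree_sup_pow_idealOfVars (k : ℕ) :
    restrictTotalDegree σ R k ⊔ (idealOfVars σ R ^ k).restrictScalars R = ⊤ := by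
  refine eq_top_iff.2 fun p _ => ?_
  induction p using MvPolynomial.induction_on' with
  | monomial v c =>
    rcases le_total v.degree k with hv | hv
    · refine Submodule.mem_sup_left ((mem_restrictTotalDegree σ k _).2 ?_)
      exact (isHomogeneous_monomial c rfl).totalDegree_le.trans hv
    · exact Submodule.mem_sup_right (Ideal.pow_le_pow_right hv (monomial_mem_pow_idealOfVars v c))
  | add p q hp hq => exact add_mem (hp trivial) (hq trivial)

theorem homogeneousComponent_monomial_mul (v : σ →₀ ℕ) (c : R) (p : MvPolynomial σ R) (j : ℕ) :
    homogeneousComponent (v.degree + j) (monomial v c * p) =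
      monomial v c * homogeneousComponent j p := by
  classical
  ext u
  simp only [coeff_homogeneousComponent, coeff_monomial_mul']
  by_cases h : v ≤ u
  · obtain ⟨w, rfl⟩ := exists_add_of_le h
    simp [map_add]
  · simp [h]

end Order

section TangentCone

section Semiring

variable {R : Type*} [CommSemiring R] {σ : Type*}

theorem exists_mem_pow_idealOfVars_and_lowestForm_eq (f : MvPolynomial σ R) :
    ∃ k, f ∈ idealOfVars σ R ^ k ∧ lowestForm f = homogeneousComponent k f :=
  ⟨_, mem_pow_idealOfVars_iff_homogeneousComponent.2 fun _ hj =>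
    not_not.1 (Nat.notMem_of_lt_sInf hj), rfl⟩

theorem lowestForm_eq_homogeneousComponent {k : ℕ} {f : MvPolynomial σ R}
    (hf : f ∈ idealOfVars σ R ^ k) (hk : homogeneousComponent k f ≠ 0) :
    lowestForm f = homogeneousComponent k f := by
  have hleast : IsLeast {i : ℕ | homogeneousComponent i f ≠ 0} k :=
    ⟨hk, fun j hj => not_lt.1 fun hjk =>
      hj (mem_pow_idealOfVars_iff_homogeneousComponent.1 hf j hjk)⟩
  rw [lowestForm, hleast.csInf_eq]

theorem homogeneousComponent_mem_tangentConeIdeal {J : Ideal (MvPolynomial σ R)} {k : ℕ}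
    {f : MvPolynomial σ R} (hfJ : f ∈ J) (hf : f ∈ idealOfVars σ R ^ k) :
    homogeneousComponent k f ∈ tangentConeIdeal J := by
  by_cases hk : homogeneousComponent k f = 0
  · rw [hk]
    exact zero_mem _
  · exact Ideal.subset_span
      ⟨f, hfJ, fun h => hk (by rw [h, map_zero]), (lowestForm_eq_homogeneousComponent hf hk).symm⟩

theorem homogeneousComponent_monomial_mul_mem {J : Ideal (MvPolynomial σ R)}
    {p : MvPolynomial σ R}
    (hp : ∀ k, homogeneousComponent k p ∈ J ⊔ idealOfVars σ R ^ (k + 1))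
    (v : σ →₀ ℕ) (c : R) (k : ℕ) :
    homogeneousComponent k (monomial v c * p) ∈ J ⊔ idealOfVars σ R ^ (k + 1) := by
  have hv := monomial_mem_pow_idealOfVars v c
  by_cases hvk : v.degree ≤ k
  · obtain ⟨j, rfl⟩ := exists_add_of_le hvk
    obtain ⟨a, ha, b, hb, hab⟩ := Submodule.mem_sup.1 (hp j)
    rw [homogeneousComponent_monomial_mul, ← hab, mul_add, add_assoc, pow_add]
    exact Submodule.add_mem_sup (J.mul_mem_left _ ha) (Ideal.mul_mem_mul hv hb)
  · rw [mem_pow_idealOfVars_iff_homogeneousComponent.1 (Ideal.mul_mem_right p _ hv) k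
      (not_le.1 hvk)]
    exact zero_mem _

end Semiring

variable {R : Type*} [CommRing R] {σ : Type*}

theorem homogeneousComponent_lowestForm_mem {J : Ideal (MvPolynomial σ R)}
    {f : MvPolynomial σ R} (hf : f ∈ J) (k : ℕ) :
    homogeneousComponent k (lowestForm f) ∈ J ⊔ idealOfVars σ R ^ (k + 1) := by
  obtain ⟨j, hfj, hj⟩ := exists_mem_pow_idealOfVars_and_lowestForm_eq f
  rw [hj, homogeneousComponent_of_mem (homogeneousComponent_mem j f)]
  split_ifs with hjk
  · subst hjk
    rw [← sub_sub_cancel f (homogeneousComponent k f)]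
    exact sub_mem (Ideal.mem_sup_left hf)
      (Ideal.mem_sup_right (sub_homogeneousComponent_mem_pow_idealOfVars hfj))
  · exact zero_mem _

theorem homogeneousComponent_mem_of_mem_tangentConeIdeal {J : Ideal (MvPolynomial σ R)}
    {p : MvPolynomial σ R} (hp : p ∈ tangentConeIdeal J) (k : ℕ) :
    homogeneousComponent k p ∈ J ⊔ idealOfVars σ R ^ (k + 1) := by
  rw [tangentConeIdeal] at hp
  induction hp using Submodule.span_induction generalizing k with
  | mem p hp =>
    obtain ⟨f, hf, -, rfl⟩ := hp
    exact homogeneousComponent_lowestForm_mem hf k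
  | zero => simp
  | add p q _ _ hp hq =>
    rw [map_add]
    exact add_mem (hp k) (hq k)
  | smul a p _ hp =>
    induction a using MvPolynomial.induction_on' with
    | monomial v c => exact homogeneousComponent_monomial_mul_mem hp v c k
    | add a b ha hb =>
      rw [add_smul, map_add]
      exact add_mem ha hb

theorem mem_tangentConeIdeal_iff_of_isHomogeneous {J : Ideal (MvPolynomial σ R)} {k : ℕ}
    {p : MvPolynomial σ R} (hp : p.IsHomogeneous k) :
    p ∈ tangentConeIdeal J ↔ p ∈ J ⊔ idealOfVars σ R ^ (k + 1) := by
  constructor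
  · intro h
    rw [← homogeneousComponent_eq_self hp]
    exact homogeneousComponent_mem_of_mem_tangentConeIdeal h k
  · intro h
    obtain ⟨a, ha, b, hb, rfl⟩ := Submodule.mem_sup.1 h
    have hak : a ∈ idealOfVars σ R ^ k :=
      (add_mem_cancel_right (Ideal.pow_le_pow_right k.le_succ hb)).1
        (mem_pow_idealOfVars_of_isHomogeneous hp)
    rw [← homogeneousComponent_eq_self hp, map_add,
      mem_pow_idealOfVars_iff_homogeneousComponent.1 hb k k.lt_succ_self, add_zero]
    exact homogeneousComponent_mem_tangentConeIdeal ha hak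

theorem sup_pow_idealOfVars_succ_sup_homogeneousSubmodule (J : Ideal (MvPolynomial σ R)) (k : ℕ) :
    (J ⊔ idealOfVars σ R ^ (k + 1)).restrictScalars R ⊔ homogeneousSubmodule σ R k =
      (J ⊔ idealOfVars σ R ^ k).restrictScalars R := by
  refine le_antisymm (sup_le ?_ fun p hp => ?_) fun p hp => ?_
  · exact sup_le_sup_left (Ideal.pow_le_pow_right k.le_succ) J
  · exact Ideal.mem_sup_right (mem_pow_idealOfVars_of_isHomogeneous hp)
  · obtain ⟨a, ha, b, hb, rfl⟩ := Submodule.mem_sup.1 hp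
    rw [← sub_add_cancel b (homogeneousComponent k b), ← add_assoc]
    exact Submodule.add_mem_sup
      (Submodule.add_mem_sup ha (sub_homogeneousComponent_mem_pow_idealOfVars hb))
      (homogeneousComponent_mem k b)

theorem sup_pow_idealOfVars_succ_inf_homogeneousSubmodule (J : Ideal (MvPolynomial σ R)) (k : ℕ) :
    (J ⊔ idealOfVars σ R ^ (k + 1)).restrictScalars R ⊓ homogeneousSubmodule σ R k =
      (tangentConeIdeal J).restrictScalars R ⊓ homogeneousSubmodule σ R k := by
  ext p
  exact and_congr_left fun hp => (mem_tangentConeIdeal_iff_of_isHomogeneous hp).symm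

end TangentCone

section HilbertSamuel

variable {K : Type*} [Field K]

theorem finrank_quotient_eq_finrank_quotient_sup_add {V : Type*} [AddCommGroup V] [Module K V]
    (A W : Submodule K V) [Module.Finite K (V ⧸ A)] [Module.Finite K W] :
    Module.finrank K (V ⧸ A) = Module.finrank K (V ⧸ A ⊔ W) +
      (Module.finrank K W - Module.finrank K (A ⊓ W : Submodule K V)) := by
  have hsup := (A.quotientQuotientEquivQuotientSup W).finrank_eq
  have hquot := (W.map A.mkQ).finrank_quotient_add_finrank
  have hrank := (A.mkQ.domRestrict W).finrank_range_add_finrank_ker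
  have hrange : LinearMap.range (A.mkQ.domRestrict W) = W.map A.mkQ := by
    rw [LinearMap.range_domRestrict]
  have hker : LinearMap.ker (A.mkQ.domRestrict W) = (A ⊓ W).comap W.subtype := by
    rw [LinearMap.ker_domRestrict, Submodule.ker_mkQ]
    simp
  have hinf := (Submodule.comapSubtypeEquivOfLe (inf_le_right : A ⊓ W ≤ W)).finrank_eq
  rw [hrange, hker] at hrank
  omega

variable {σ : Type*}

/-- The Hilbert–Samuel function `k ↦ dim_K P/(J + 𝔪^k)` of the local ring of `P/J` at the origin,
where `𝔪` is the ideal generated by the variables. -/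
noncomputable def hilbertSamuelFn (J : Ideal (MvPolynomial σ K)) (k : ℕ) : ℕ :=
  Module.finrank K (MvPolynomial σ K ⧸ (J ⊔ idealOfVars σ K ^ k).restrictScalars K)

instance finite_quotient_sup_pow_idealOfVars [Finite σ] (J : Ideal (MvPolynomial σ K)) (k : ℕ) :
    Module.Finite K (MvPolynomial σ K ⧸ (J ⊔ idealOfVars σ K ^ k).restrictScalars K) := by
  have hfg : (restrictTotalDegree σ K k).FG := Module.Finite.iff_fg.1 inferInstance
  have hcofg := hfg.cofg_of_codisjoint
    (codisjoint_iff.2 (restrictTotalDegree_sup_pow_idealOfVars k))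
  exact hcofg.of_le (Submodule.restrictScalars_mono (S := K) le_sup_right)

instance finite_homogeneousSubmodule [Finite σ] (k : ℕ) :
    Module.Finite K (homogeneousSubmodule σ K k) :=
  Module.Finite.iff_fg.2 (homogeneousSubmodule_fg σ K k)

theorem hilbertSamuelFn_succ [Finite σ] (J : Ideal (MvPolynomial σ K)) (k : ℕ) :
    hilbertSamuelFn J (k + 1) = hilbertSamuelFn J k + hilbertFn (tangentConeIdeal J) k := by
  rw [hilbertSamuelFn, finrank_quotient_eq_finrank_quotient_sup_add _ (homogeneousSubmodule σ K k),
    sup_pow_idealOfVars_succ_sup_homogeneousSubmodule,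
    sup_pow_idealOfVars_succ_inf_homogeneousSubmodule]
  rfl

end HilbertSamuel

section RootExtension

variable {σ τ : Type*} {e : σ → τ} {y : τ} {ℓ : ℕ}

theorem exists_eq_mapDomain_add_single (hey : ∀ t, (∃ s, t = e s) ∨ t = y) (v : τ →₀ ℕ) :
    ∃ (u : σ →₀ ℕ) (a : ℕ), v = u.mapDomain e + Finsupp.single y a := by
  induction v using Finsupp.induction_linear with
  | zero => exact ⟨0, 0, by simp⟩
  | add v w hv hw =>
    obtain ⟨u, a, rfl⟩ := hv
    obtain ⟨u', a', rfl⟩ := hw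
    exact ⟨u + u', a + a', by rw [Finsupp.mapDomain_add, Finsupp.single_add]; abel⟩
  | single t b =>
    rcases hey t with ⟨s, rfl⟩ | rfl
    · exact ⟨Finsupp.single s b, 0, by simp⟩
    · exact ⟨0, b, by simp⟩

section Semiring

variable {R : Type*} [CommSemiring R]

theorem rename_mem_pow_idealOfVars (e : σ → τ) {k : ℕ} {f : MvPolynomial σ R}
    (hf : f ∈ idealOfVars σ R ^ k) : rename e f ∈ idealOfVars τ R ^ k := by
  have hmap : (idealOfVars σ R).map (rename e) ≤ idealOfVars τ R := by
    rw [Ideal.map_span, Ideal.span_le]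
    rintro _ ⟨_, ⟨i, rfl⟩, rfl⟩
    exact Ideal.subset_span ⟨e i, (rename_X e i).symm⟩
  have hmem := Ideal.mem_map_of_mem (rename e) hf
  rw [Ideal.map_pow] at hmem
  exact Ideal.pow_right_mono hmap k hmem

/-- The polynomial `∑ i < ℓ, r i * y ^ i` with coefficients `r i` in the variables `σ`, viewed
inside the variables `τ` along `e`. -/
noncomputable def polynomialOfCoeffs (R : Type*) [CommSemiring R] (e : σ → τ) (y : τ) (ℓ : ℕ) :
    (Fin ℓ → MvPolynomial σ R) →ₗ[R] MvPolynomial τ R :=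
  ∑ i : Fin ℓ, LinearMap.mulRight R (X y ^ (i : ℕ)) ∘ₗ (rename e).toLinearMap ∘ₗ LinearMap.proj i

theorem polynomialOfCoeffs_apply (r : Fin ℓ → MvPolynomial σ R) :
    polynomialOfCoeffs R e y ℓ r = ∑ i, rename e (r i) * X y ^ (i : ℕ) := by
  simp [polynomialOfCoeffs]

theorem polynomialOfCoeffs_single (i : Fin ℓ) (f : MvPolynomial σ R) :
    polynomialOfCoeffs R e y ℓ (Pi.single i f) = rename e f * X y ^ (i : ℕ) := by
  rw [polynomialOfCoeffs_apply, Finset.sum_eq_single i]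
  · rw [Pi.single_eq_same]
  · intro j _ hj
    rw [Pi.single_eq_of_ne hj, map_zero, zero_mul]
  · simp

theorem polynomialOfCoeffs_mem_pow_idealOfVars {k : ℕ} {r : Fin ℓ → MvPolynomial σ R}
    (hr : ∀ i : Fin ℓ, r i ∈ idealOfVars σ R ^ (k - i)) :
    polynomialOfCoeffs R e y ℓ r ∈ idealOfVars τ R ^ k := by
  rw [polynomialOfCoeffs_apply]
  refine sum_mem fun i _ => Ideal.pow_le_pow_right (le_tsub_add : k ≤ k - i + i) ?_
  rw [pow_add]
  exact Ideal.mul_mem_mul (rename_mem_pow_idealOfVars e (hr i))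
    (Ideal.pow_mem_pow (Ideal.subset_span (Set.mem_range_self y)) i)

end Semiring

variable {R : Type*} [CommRing R]

/-- The quotient by `J'` is the extension of the quotient by `J` obtained by adjoining an `ℓ`-th
root `y` of an element of `𝔪 ^ ℓ`, with `1, y, …, y ^ (ℓ - 1)` as a basis. The variables are those
of `J`, embedded along `e`, together with `y`. -/
structure IsRootExtension (e : σ → τ) (y : τ) (ℓ : ℕ) (J : Ideal (MvPolynomial σ R))
    (J' : Ideal (MvPolynomial τ R)) : Prop where
  pos : 0 < ℓ
  exists_eq_or_eq : ∀ t, (∃ s, t = e s) ∨ t = y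
  exists_pow_sub_mem : ∃ F ∈ idealOfVars σ R ^ ℓ, X y ^ ℓ - rename e F ∈ J'
  polynomialOfCoeffs_mem_iff : ∀ r, polynomialOfCoeffs R e y ℓ r ∈ J' ↔ ∀ i, r i ∈ J

namespace IsRootExtension

variable {J : Ideal (MvPolynomial σ R)} {J' : Ideal (MvPolynomial τ R)}

theorem finite [Finite σ] (h : IsRootExtension e y ℓ J J') : Finite τ :=
  Set.finite_univ_iff.1 <| ((Set.finite_range e).insert y).subset fun t _ =>
    (h.exists_eq_or_eq t).symm.imp_right fun ⟨s, hs⟩ => ⟨s, hs.symm⟩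

/-- The tuples `r` with `r i ∈ J + 𝔪 ^ (k - i)`: the coefficients of the elements of `J' + 𝔪 ^ k`,
as `y` has order one. The subtraction is truncated, so there is no condition on `r i` for
`k ≤ i`. -/
noncomputable def coeffFiltration (J : Ideal (MvPolynomial σ R)) (ℓ k : ℕ) :
    Submodule R (Fin ℓ → MvPolynomial σ R) :=
  Submodule.pi Set.univ fun i : Fin ℓ => (J ⊔ idealOfVars σ R ^ (k - i)).restrictScalars R

-- Division with remainder of the exponent of `y` by `ℓ`, trading `y ^ ℓ` for `F ∈ 𝔪 ^ ℓ`.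
theorem rename_mul_X_pow_mem (h : IsRootExtension e y ℓ J J') {k a : ℕ} {f : MvPolynomial σ R}
    (hf : f ∈ idealOfVars σ R ^ (k - a)) :
    rename e f * X y ^ a ∈
      (coeffFiltration J ℓ k).map (polynomialOfCoeffs R e y ℓ) ⊔ J'.restrictScalars R := by
  obtain ⟨F, hF, hFJ'⟩ := h.exists_pow_sub_mem
  let i₀ : Fin ℓ := ⟨a % ℓ, Nat.mod_lt a h.pos⟩
  have hdiv : ℓ * (a / ℓ) + a % ℓ = a := Nat.div_add_mod a ℓ
  have horder : f * F ^ (a / ℓ) ∈ idealOfVars σ R ^ (k - i₀) := by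
    refine Ideal.pow_le_pow_right (?_ : k - a % ℓ ≤ k - a + ℓ * (a / ℓ)) ?_
    · omega
    · rw [pow_add, pow_mul]
      exact Ideal.mul_mem_mul hf (Ideal.pow_mem_pow hF _)
  have hcongr : rename e f * X y ^ a - rename e (f * F ^ (a / ℓ)) * X y ^ (a % ℓ) ∈ J' := by
    have hpow : (X y ^ ℓ) ^ (a / ℓ) - rename e F ^ (a / ℓ) ∈ J' :=
      J'.mem_of_dvd (sub_dvd_pow_sub_pow _ _ _) hFJ'
    convert J'.mul_mem_left (rename e f * X y ^ (a % ℓ)) hpow using 1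
    rw [← pow_mul, map_mul, map_pow]
    nth_rewrite 1 [← hdiv]
    ring
  rw [← add_sub_cancel (rename e (f * F ^ (a / ℓ)) * X y ^ (a % ℓ)) (rename e f * X y ^ a)]
  refine Submodule.add_mem_sup ⟨Pi.single i₀ (f * F ^ (a / ℓ)), ?_, ?_⟩ hcongr
  · exact Submodule.le_comap_single_pi _ (Ideal.mem_sup_right horder)
  · exact polynomialOfCoeffs_single i₀ _

theorem pow_idealOfVars_le (h : IsRootExtension e y ℓ J J') (k : ℕ) :
    (idealOfVars τ R ^ k).restrictScalars R ≤
      (coeffFiltration J ℓ k).map (polynomialOfCoeffs R e y ℓ) ⊔ J'.restrictScalars R := by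
  intro p hp
  rw [Submodule.restrictScalars_mem, mem_pow_idealOfVars_iff] at hp
  rw [p.as_sum]
  refine sum_mem fun v hv => ?_
  obtain ⟨u, a, rfl⟩ := exists_eq_mapDomain_add_single h.exists_eq_or_eq v
  have hdegree := hp _ hv
  rw [map_add, Finsupp.degree_mapDomain, Finsupp.degree_single] at hdegree
  rw [← mul_one (coeff _ p), ← monomial_mul, ← rename_monomial, ← X_pow_eq_monomial]
  exact h.rename_mul_X_pow_mem
    (Ideal.pow_le_pow_right (by omega) (monomial_mem_pow_idealOfVars u _))

theorem sup_pow_idealOfVars_eq (h : IsRootExtension e y ℓ J J') (k : ℕ) :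
    (J' ⊔ idealOfVars τ R ^ k).restrictScalars R =
      (coeffFiltration J ℓ k).map (polynomialOfCoeffs R e y ℓ) ⊔ J'.restrictScalars R := by
  refine le_antisymm ?_ (sup_le ?_ ?_)
  · rw [Submodule.restrictScalars_sup]
    exact sup_le le_sup_right (h.pow_idealOfVars_le k)
  · rintro _ ⟨r, hr, rfl⟩
    choose a ha b hb hab using fun i => Submodule.mem_sup.1 (hr i trivial)
    obtain rfl : a + b = r := funext hab
    rw [map_add]
    exact Submodule.add_mem_sup ((h.polynomialOfCoeffs_mem_iff a).2 ha)
      (polynomialOfCoeffs_mem_pow_idealOfVars hb)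
  · exact Submodule.restrictScalars_mono (S := R) le_sup_left

theorem comap_polynomialOfCoeffs (h : IsRootExtension e y ℓ J J') (k : ℕ) :
    ((J' ⊔ idealOfVars τ R ^ k).restrictScalars R).comap (polynomialOfCoeffs R e y ℓ) =
      coeffFiltration J ℓ k := by
  rw [h.sup_pow_idealOfVars_eq]
  refine Submodule.comap_map_sup_of_comap_le fun r hr i _ => ?_
  exact Ideal.mem_sup_left ((h.polynomialOfCoeffs_mem_iff r).1 hr i)

theorem mkQ_comp_polynomialOfCoeffs_surjective (h : IsRootExtension e y ℓ J J') (k : ℕ) :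
    Function.Surjective (((J' ⊔ idealOfVars τ R ^ k).restrictScalars R).mkQ ∘ₗ
      polynomialOfCoeffs R e y ℓ) := by
  rw [← LinearMap.range_eq_top, LinearMap.range_comp, Submodule.map_mkQ_eq_top, eq_top_iff]
  have htop := h.pow_idealOfVars_le 0
  rw [pow_zero, Ideal.one_eq_top, Submodule.restrictScalars_top] at htop
  refine htop.trans (sup_le (LinearMap.map_le_range.trans le_sup_right) ?_)
  exact (Submodule.restrictScalars_mono (S := R) le_sup_left).trans le_sup_left

end IsRootExtension

end RootExtension

namespace IsRootExtension

variable {K : Type*} [Field K] {σ τ : Type*} [Finite σ] {e : σ → τ} {y : τ} {ℓ : ℕ}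
  {J : Ideal (MvPolynomial σ K)} {J' : Ideal (MvPolynomial τ K)}

theorem hilbertSamuelFn_eq_sum (h : IsRootExtension e y ℓ J J') (k : ℕ) :
    hilbertSamuelFn J' k = ∑ i : Fin ℓ, hilbertSamuelFn J (k - i) := by
  have hker := (LinearMap.ker_comp (polynomialOfCoeffs K e y ℓ)
    ((J' ⊔ idealOfVars τ K ^ k).restrictScalars K).mkQ).trans <| by
      rw [Submodule.ker_mkQ, h.comap_polynomialOfCoeffs]
  simp only [hilbertSamuelFn]
  rw [← (LinearMap.quotKerEquivOfSurjective _
      (h.mkQ_comp_polynomialOfCoeffs_surjective k)).finrank_eq,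
    (Submodule.quotEquivOfEq _ _ hker).finrank_eq, coeffFiltration,
    (Submodule.quotientPi _).finrank_eq, Module.finrank_pi_fintype]

theorem hilbertFn_tangentConeIdeal_eq_sum (h : IsRootExtension e y ℓ J J') (k : ℕ) :
    hilbertFn (tangentConeIdeal J') k =
      ∑ i : Fin ℓ, if (i : ℕ) ≤ k then hilbertFn (tangentConeIdeal J) (k - i) else 0 := by
  have := h.finite
  refine Nat.add_left_cancel (n := hilbertSamuelFn J' k) ?_
  rw [← hilbertSamuelFn_succ, h.hilbertSamuelFn_eq_sum, h.hilbertSamuelFn_eq_sum,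
    ← Finset.sum_add_distrib]
  refine Finset.sum_congr rfl fun i _ => ?_
  split_ifs with hik
  · rw [← hilbertSamuelFn_succ, Nat.sub_add_comm hik]
  · rw [add_zero, Nat.sub_eq_zero_of_le (by omega), Nat.sub_eq_zero_of_le (by omega)]

theorem monotone_hilbertFn_tangentConeIdeal (h : IsRootExtension e y ℓ J J')
    (hmono : Monotone (hilbertFn (tangentConeIdeal J))) :
    Monotone (hilbertFn (tangentConeIdeal J')) := by
  intro a b hab
  simp only [h.hilbertFn_tangentConeIdeal_eq_sum]
  refine Finset.sum_le_sum fun i _ => ?_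
  split_ifs with hia hib
  · exact hmono (Nat.sub_le_sub_right hab i)
  · exact absurd (hia.trans hab) hib
  · exact Nat.zero_le _
  · exact le_rfl

end IsRootExtension

section Toric

theorem eq_zero_of_sum_expand_mul_monomial_eq_zero {R ι : Type*} [CommSemiring R] {ℓ : ℕ}
    {M : ι →₀ ℕ} (hM : ∃ j, Nat.Coprime ℓ (M j))
    {q : Fin ℓ → MvPolynomial ι R}
    (hq : ∑ i : Fin ℓ, expand ℓ (q i) * monomial ((i : ℕ) • M) 1 = 0) (i : Fin ℓ) : q i = 0 := by
  classical
  obtain ⟨j, hj⟩ := hM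
  have hother : ∀ (u : ι →₀ ℕ) (i' : Fin ℓ), i' ≠ i →
      coeff (ℓ • u + (i : ℕ) • M) (expand ℓ (q i') * monomial ((i' : ℕ) • M) 1) = 0 := by
    intro u i' hne
    rw [coeff_mul_monomial', ite_eq_right_iff]
    intro hle
    rw [mul_one]
    refine coeff_expand_of_not_dvd _ (i := j) fun hdvd => hne ?_
    have hmod : (i' : ℕ) * M j ≡ ℓ * u j + i * M j [MOD ℓ] := by
      simpa using (Nat.modEq_iff_dvd' (hle j)).2 hdvd
    have hcancel := Nat.ModEq.cancel_right_of_coprime hj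
      (hmod.trans (by simp [Nat.ModEq] : _ ≡ i * M j [MOD ℓ]))
    exact Fin.ext (hcancel.eq_of_lt_of_lt i'.2 i.2)
  ext u
  have hcoeff := congrArg (coeff (ℓ • u + (i : ℕ) • M)) hq
  rw [coeff_sum, Finset.sum_eq_single i (fun i' _ => hother u i') (by simp), coeff_mul_monomial,
    coeff_expand_smul _ i.pos.ne'] at hcoeff
  simpa using hcoeff

theorem isRootExtension_ker {R σ τ ι : Type*} [CommRing R] {e : σ → τ} {y : τ} {ℓ : ℕ}
    (hℓ : 0 < ℓ) (hey : ∀ t, (∃ s, t = e s) ∨ t = y)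
    {φ : MvPolynomial σ R →ₐ[R] MvPolynomial ι R} {ψ : MvPolynomial τ R →ₐ[R] MvPolynomial ι R}
    (hψ : ψ.comp (rename e) = (expand ℓ).comp φ)
    {M : ι →₀ ℕ} (hM : ∃ j, Nat.Coprime ℓ (M j)) (hy : ψ (X y) = monomial M 1)
    {F : MvPolynomial σ R} (hF : F ∈ idealOfVars σ R ^ ℓ) (hφF : φ F = monomial M 1) :
    IsRootExtension e y ℓ (RingHom.ker φ) (RingHom.ker ψ) := by
  have hrename : ∀ p, ψ (rename e p) = expand ℓ (φ p) := DFunLike.congr_fun hψ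
  refine ⟨hℓ, hey, ⟨F, hF, ?_⟩, fun r => ?_⟩
  · rw [RingHom.mem_ker, map_sub, map_pow, hy, hrename, hφF, expand_monomial, monomial_pow,
      one_pow, sub_self]
  · have hsum : ψ (polynomialOfCoeffs R e y ℓ r) =
        ∑ i : Fin ℓ, expand ℓ (φ (r i)) * monomial ((i : ℕ) • M) 1 := by
      simp only [polynomialOfCoeffs_apply, map_sum, map_mul, map_pow, hrename, hy, monomial_pow,
        one_pow]
    simp only [RingHom.mem_ker, hsum]
    exact ⟨eq_zero_of_sum_expand_mul_monomial_eq_zero hM, fun h => by simp [h]⟩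

theorem prod_X_pow_eq_monomial_equivFunOnFinite {R ι : Type*} [CommSemiring R] [Fintype ι]
    (a : ι → ℕ) :
    (∏ j, X j ^ a j : MvPolynomial ι R) = monomial (Finsupp.equivFunOnFinite.symm a) 1 := by
  rw [monomial_eq, Finsupp.prod_fintype _ _ (by simp)]
  simp

theorem prod_X_pow_mem_pow_idealOfVars {R σ : Type*} [CommSemiring R] [Fintype σ] {s : σ → ℕ}
    {ℓ : ℕ} (hs : ℓ ≤ ∑ i, s i) :
    (∏ i, X i ^ s i : MvPolynomial σ R) ∈ idealOfVars σ R ^ ℓ :=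
  Ideal.pow_le_pow_right hs <| mem_pow_idealOfVars_of_isHomogeneous <|
    .prod _ _ _ fun i _ => isHomogeneous_X_pow i (s i)

theorem aeval_prod_X_pow {R σ ι : Type*} [CommSemiring R] [Fintype σ] [Fintype ι]
    (m : σ → ι → ℕ) (s : σ → ℕ) :
    aeval (fun i => (∏ j, X j ^ m i j : MvPolynomial ι R)) (∏ i, X i ^ s i : MvPolynomial σ R) =
      monomial (Finsupp.equivFunOnFinite.symm fun j => ∑ i, s i * m i j) 1 := by
  rw [← prod_X_pow_eq_monomial_equivFunOnFinite]
  simp only [map_prod, map_pow, aeval_X, ← Finset.prod_pow, ← Finset.prod_pow_eq_pow_sum,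
    ← pow_mul, mul_comm]
  exact Finset.prod_comm

theorem aeval_lastCases_comp_rename_castSucc {R ι : Type*} [CommSemiring R] [Fintype ι] {n : ℕ}
    (ℓ : ℕ) (m : Fin n → ι → ℕ) (q : MvPolynomial ι R) :
    (aeval fun i : Fin (n + 1) =>
      Fin.lastCases q (fun i' : Fin n => (∏ j, X j ^ (ℓ * m i' j) : MvPolynomial ι R)) i).comp
        (rename Fin.castSucc) = (expand ℓ).comp (aeval fun i => ∏ j, X j ^ m i j) := by
  ext1 i
  simp only [AlgHom.comp_apply, rename_X, aeval_X, Fin.lastCases_castSucc, map_prod, map_pow,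
    expand_X, pow_mul]

end Toric

theorem stmt_10_general {K σ τ ι : Type*} [Field K] [Finite σ] {e : σ → τ} {y : τ} {ℓ : ℕ}
    (hℓ : 0 < ℓ) (hey : ∀ t, (∃ s, t = e s) ∨ t = y)
    {φ : MvPolynomial σ K →ₐ[K] MvPolynomial ι K} {ψ : MvPolynomial τ K →ₐ[K] MvPolynomial ι K}
    (hψ : ψ.comp (rename e) = (expand ℓ).comp φ)
    {M : ι →₀ ℕ} (hM : ∃ j, Nat.Coprime ℓ (M j)) (hy : ψ (X y) = monomial M 1)
    {F : MvPolynomial σ K} (hF : F ∈ idealOfVars σ K ^ ℓ) (hφF : φ F = monomial M 1)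
    (hmono : Monotone (hilbertFn (tangentConeIdeal (RingHom.ker φ)))) :
    Monotone (hilbertFn (tangentConeIdeal (RingHom.ker ψ))) :=
  (isRootExtension_ker hℓ hey hψ hM hy hF hφF).monotone_hilbertFn_tangentConeIdeal hmono

/-- For `ℓ ≤ s_1 + ⋯ + s_n` positive and coprime to some
component of `m = s_1 m_1 + ⋯ + s_n m_n`: if the Hilbert function of the local
ring of `V_S` (i.e. of the associated graded ring `K[x]/I_S*`) is
non-decreasing, then so is the Hilbert function of the local ring of the
extension. -/
theorem stmt_10 (K : Type*) [Field K] (d n : ℕ)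
    (m : Fin n → Fin d → ℕ) (s : Fin n → ℕ) (ℓ : ℕ) (hℓ : 0 < ℓ)
    (hδ : ℓ ≤ ∑ i, s i)
    (hgcd : ∃ j : Fin d, Nat.gcd ℓ (∑ i, s i * m i j) = 1)
    (φ : MvPolynomial (Fin n) K →ₐ[K] MvPolynomial (Fin d) K)
    (hφ : φ = aeval fun i : Fin n => ∏ j : Fin d, X j ^ m i j)
    (ψ : MvPolynomial (Fin (n + 1)) K →ₐ[K] MvPolynomial (Fin d) K)
    (hψ : ψ = aeval fun i : Fin (n + 1) =>
      Fin.lastCases (∏ j : Fin d, X j ^ (∑ i', s i' * m i' j))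
        (fun i' : Fin n => ∏ j : Fin d, X j ^ (ℓ * m i' j)) i)
    (hmono : Monotone (hilbertFn (tangentConeIdeal (RingHom.ker φ)))) :
    Monotone (hilbertFn (tangentConeIdeal (RingHom.ker ψ))) := by
  subst hφ hψ
  exact stmt_10_general hℓ Fin.eq_castSucc_or_eq_last
    (M := Finsupp.equivFunOnFinite.symm fun j => ∑ i, s i * m i j)
    (aeval_lastCases_comp_rename_castSucc ℓ m _) hgcd
    (by rw [aeval_X, Fin.lastCases_last, prod_X_pow_eq_monomial_equivFunOnFinite])
    (prod_X_pow_mem_pow_idealOfVars hδ) (aeval_prod_X_pow m s) hmono
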